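/- In any 2-crossed module (L →δ H →∂ G, ▷, {·,·}_p), for all h₁, h₂, h₃ ∈ H one has {h₁, h₂h₃}_p = (∂(h₁) ▷ h₂) ▷' ({h₁, h₂⁻¹}_p⁻¹ · {h₁, h₃}_p). -/

import Mathlib

/-- A 2-crossed module `(L --δ--> H --∂--> G, ▷, Peiffer lifting)`:
groups `G H L`, homomorphisms `δ : L → H` (field `δ`) and `∂ : H → G` (field `bd`)
with `∂ ∘ δ = 1`, left actions `▷` of `G` on `H` and `L` by automorphisms
(fields `actH`, `actL`; `G` acts on itself by conjugation), and the Peiffer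
lifting `{·,·}_p : H × H → L` (field `pf`), subject to the usual axioms. -/
structure TwoCrossedModule (G H L : Type*) [Group G] [Group H] [Group L] where
  δ : L →* H
  bd : H →* G
  actH : G →* MulAut H
  actL : G →* MulAut L
  pf : H → H → L
  comp_eq_one : ∀ l : L, bd (δ l) = 1
  -- (i) g ▷ ∂(h) = ∂(g ▷ h), where G acts on itself by conjugation
  act_bd : ∀ (g : G) (h : H), g * bd h * g⁻¹ = bd (actH g h)
  -- (i) g ▷ δ(l) = δ(g ▷ l)
  act_δ : ∀ (g : G) (l : L), actH g (δ l) = δ (actL g l)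
  -- (ii) g ▷ {h₁,h₂}_p = {g ▷ h₁, g ▷ h₂}_p
  act_pf : ∀ (g : G) (h₁ h₂ : H), actL g (pf h₁ h₂) = pf (actH g h₁) (actH g h₂)
  -- (iii) δ({h₁,h₂}_p) = h₁h₂h₁⁻¹·(∂(h₁) ▷ h₂⁻¹)
  δ_pf : ∀ h₁ h₂ : H, δ (pf h₁ h₂) = h₁ * h₂ * h₁⁻¹ * actH (bd h₁) h₂⁻¹
  -- (iv) {δ(l₁), δ(l₂)}_p = l₁l₂l₁⁻¹l₂⁻¹
  pf_δ_δ : ∀ l₁ l₂ : L, pf (δ l₁) (δ l₂) = l₁ * l₂ * l₁⁻¹ * l₂⁻¹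
  -- (v) {h₁h₂, h₃}_p = {h₁, h₂h₃h₂⁻¹}_p · (∂(h₁) ▷ {h₂,h₃}_p)
  pf_mul_left : ∀ h₁ h₂ h₃ : H,
    pf (h₁ * h₂) h₃ = pf h₁ (h₂ * h₃ * h₂⁻¹) * actL (bd h₁) (pf h₂ h₃)
  -- (vi) {h₁, h₂h₃}_p = {h₁,h₂}_p · {h₁,h₃}_p · {⟨h₁,h₃⟩_p⁻¹, ∂(h₁) ▷ h₂}_p,
  -- where ⟨h₁,h₃⟩_p = h₁h₃h₁⁻¹·(∂(h₁) ▷ h₃⁻¹) is the Peiffer commutator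
  pf_mul_right : ∀ h₁ h₂ h₃ : H,
    pf h₁ (h₂ * h₃) = pf h₁ h₂ * pf h₁ h₃ *
      pf (h₁ * h₃ * h₁⁻¹ * actH (bd h₁) h₃⁻¹)⁻¹ (actH (bd h₁) h₂)
  -- (vii) {δ(l), h}_p · {h, δ(l)}_p = l·(∂(h) ▷ l⁻¹)
  pf_δ : ∀ (h : H) (l : L), pf (δ l) h * pf h (δ l) = l * actL (bd h) l⁻¹

namespace TwoCrossedModule

variable {G H L : Type*} [Group G] [Group H] [Group L]

/-- The map `▷' : H × L → L`, defined by `h ▷' l = l · {δ(l)⁻¹, h}_p`. -/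
def act' (X : TwoCrossedModule G H L) (h : H) (l : L) : L :=
  l * X.pf (X.δ l)⁻¹ h

end TwoCrossedModule

namespace TwoCrossedModule

theorem aux_pf_one {G H L : Type*} [Group G] [Group H] [Group L]
    (X : TwoCrossedModule G H L) (h : H) : X.pf h 1 = 1 := by
  have h0 : X.pf 1 1 = 1 := by
    have := X.pf_δ_δ 1 1
    simpa using this
  have h1 := X.pf_mul_right h 1 1
  simpa [h0] using h1

theorem aux_right {G H L : Type*} [Group G] [Group H] [Group L]
    (X : TwoCrossedModule G H L) (h₁ h₂ h₃ : H) :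
    X.pf h₁ (h₂ * h₃) = X.pf h₁ h₂ * X.act' (X.actH (X.bd h₁) h₂) (X.pf h₁ h₃) := by
  rw [X.pf_mul_right, act', X.δ_pf, mul_assoc]

theorem aux_mul {G H L : Type*} [Group G] [Group H] [Group L]
    (X : TwoCrossedModule G H L) (h : H) (l m : L) :
    X.act' h (l * m) = X.act' h l * X.act' h m := by
  have e1 := X.pf_mul_left (X.δ m⁻¹) (X.δ l⁻¹) h
  have e2 : X.δ l⁻¹ * h * (X.δ l⁻¹)⁻¹ = X.δ (X.pf (X.δ l⁻¹) h) * h := by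
    rw [X.δ_pf, X.comp_eq_one]
    simp
  rw [e2, X.pf_mul_right (X.δ m⁻¹), ← X.δ_pf, ← map_inv X.δ, X.comp_eq_one, map_one, map_one,
    MulAut.one_apply, MulAut.one_apply, X.pf_δ_δ, X.pf_δ_δ] at e1
  unfold act'
  rw [← map_inv, ← map_inv, ← map_inv, mul_inv_rev, map_mul, e1]
  group

end TwoCrossedModule

/-- In any 2-crossed module,
`{h₁, h₂h₃}_p = (∂(h₁) ▷ h₂) ▷' ({h₁, h₂⁻¹}_p⁻¹ · {h₁, h₃}_p)`. -/
theorem pf_mul_right'' {G H L : Type*} [Group G] [Group H] [Group L]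
    (X : TwoCrossedModule G H L) (h₁ h₂ h₃ : H) :
    X.pf h₁ (h₂ * h₃) =
      X.act' (X.actH (X.bd h₁) h₂) ((X.pf h₁ h₂⁻¹)⁻¹ * X.pf h₁ h₃) := by
  have a := X.aux_right h₁ h₂ h₂⁻¹
  rw [mul_inv_cancel, X.aux_pf_one] at a
  have b := X.aux_mul (X.actH (X.bd h₁) h₂) (X.pf h₁ h₂⁻¹) ((X.pf h₁ h₂⁻¹)⁻¹ * X.pf h₁ h₃)
  rw [mul_inv_cancel_left] at b
  rw [X.aux_right, b, ← mul_assoc, ← a, one_mul]
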